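/- Let G be a graph on [n] with λ₂(L(G)) ≥ k, for some 1 ≤ k ≤ ⌊n/2⌋. Then λ₂(L_k(G)) = λ₂(L(G)), i.e., the algebraic connectivity of the k-th token graph equals that of G. -/

import Mathlib

open Finset

/-- The `k`-th token graph of a graph `G` on `[n]` = `Fin n`: vertices are the `k`-subsets of
`[n]`, and `A, B` are adjacent iff `|A ∩ B| = k - 1` and `A △ B` is an edge of `G`. -/
def tokenGraph (n k : ℕ) (G : SimpleGraph (Fin n)) :
    SimpleGraph {s : Finset (Fin n) // s.card = k} :=
  SimpleGraph.fromRel (fun A B =>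
    (A.1 ∩ B.1).card = k - 1 ∧ ∃ u v, G.Adj u v ∧ symmDiff A.1 B.1 = {u, v})

noncomputable instance (n k : ℕ) (G : SimpleGraph (Fin n)) :
    DecidableRel (tokenGraph n k G).Adj := Classical.decRel _

/-- Laplacian matrix of the `k`-th token graph. -/
noncomputable def lapTok (n k : ℕ) (G : SimpleGraph (Fin n)) :
    Matrix {s : Finset (Fin n) // s.card = k} {s : Finset (Fin n) // s.card = k} ℝ :=
  SimpleGraph.lapMatrix ℝ (tokenGraph n k G)

/-- The second smallest eigenvalue (with multiplicity) of a Hermitian real matrix: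
the infimum over pairs of distinct indices of the larger of the two corresponding
eigenvalues. -/
noncomputable def lamSecond {V : Type*} [Fintype V] [DecidableEq V] {M : Matrix V V ℝ}
    (hM : M.IsHermitian) : ℝ :=
  sInf {y : ℝ | ∃ i j : V, i ≠ j ∧ y = max (hM.eigenvalues i) (hM.eigenvalues j)}


open Matrix in
lemma aux_basis {V : Type*} [Fintype V] [DecidableEq V] {M : Matrix V V ℝ}
    (hM : M.IsHermitian) : ∃ v : V → V → ℝ, (∀ i, M *ᵥ v i = hM.eigenvalues i • v i) ∧
      (∀ i j, v i ⬝ᵥ v j = if i = j then 1 else 0) ∧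
      (∀ x y : V → ℝ, x ⬝ᵥ y = ∑ i, (x ⬝ᵥ v i) * (v i ⬝ᵥ y)) := by
  have key : ∀ x y : EuclideanSpace ℝ V, inner ℝ x y = (x : V → ℝ) ⬝ᵥ (y : V → ℝ) := by
    intro x y
    simp [PiLp.inner_apply, dotProduct, mul_comm]
  refine ⟨fun i => (hM.eigenvectorBasis i : V → ℝ), fun i => hM.mulVec_eigenvectorBasis i, ?_, ?_⟩
  · intro i j
    rw [← key]
    exact orthonormal_iff_ite.mp hM.eigenvectorBasis.orthonormal i j
  · intro x y
    have := hM.eigenvectorBasis.sum_inner_mul_inner (WithLp.toLp 2 x) (WithLp.toLp 2 y)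
    simp only [key] at this
    exact this.symm

lemma aux_le {V : Type*} [Fintype V] [DecidableEq V] {M : Matrix V V ℝ}
    (hM : M.IsHermitian) (i j : V) (hij : i ≠ j) :
    lamSecond hM ≤ max (hM.eigenvalues i) (hM.eigenvalues j) := by
  apply csInf_le
  · apply Set.Finite.bddBelow
    apply (Set.finite_range (fun p : V × V => max (hM.eigenvalues p.1) (hM.eigenvalues p.2))).subset
    rintro y ⟨i, j, _, rfl⟩
    exact ⟨(i, j), rfl⟩
  · exact ⟨i, j, hij, rfl⟩

lemma aux_mem {V : Type*} [Fintype V] [DecidableEq V] [Nontrivial V] {M : Matrix V V ℝ}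
    (hM : M.IsHermitian) : ∃ i j : V, i ≠ j ∧
      lamSecond hM = max (hM.eigenvalues i) (hM.eigenvalues j) := by
  have hfin : {y : ℝ | ∃ i j : V, i ≠ j ∧ y = max (hM.eigenvalues i) (hM.eigenvalues j)}.Finite := by
    apply (Set.finite_range (fun p : V × V => max (hM.eigenvalues p.1) (hM.eigenvalues p.2))).subset
    rintro y ⟨i, j, _, rfl⟩
    exact ⟨(i, j), rfl⟩
  have hne : {y : ℝ | ∃ i j : V, i ≠ j ∧ y = max (hM.eigenvalues i) (hM.eigenvalues j)}.Nonempty := by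
    obtain ⟨i, j, hij⟩ := exists_pair_ne V
    exact ⟨_, i, j, hij, rfl⟩
  exact hne.csInf_mem hfin

open Matrix in
lemma aux_symm {V : Type*} [Fintype V] [DecidableEq V] {M : Matrix V V ℝ}
    (hM : M.IsHermitian) (x y : V → ℝ) : x ⬝ᵥ (M *ᵥ y) = (M *ᵥ x) ⬝ᵥ y := by
  have h : Mᵀ = M := by simpa using hM.eq
  rw [dotProduct_mulVec, ← mulVec_transpose, h]

open Matrix in
lemma aux_ray {V : Type*} [Fintype V] [DecidableEq V] {M : Matrix V V ℝ}
    (hM : M.PosSemidef) (h1 : M *ᵥ (fun _ => 1) = 0) (g : V → ℝ) (hg : ∑ x, g x = 0) :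
    lamSecond hM.isHermitian * (g ⬝ᵥ g) ≤ g ⬝ᵥ (M *ᵥ g) := by
  obtain ⟨v, hv, ho, hp⟩ := aux_basis hM.isHermitian
  set e := hM.isHermitian.eigenvalues with he
  have he0 : ∀ i, 0 ≤ e i := hM.eigenvalues_nonneg
  have hone : ∀ i, e i * ((fun _ => 1) ⬝ᵥ v i) = 0 := by
    intro i
    have := aux_symm hM.isHermitian (fun _ => 1) (v i)
    rw [h1, hv] at this
    simpa using this
  have hg1 : (fun _ => (1:ℝ)) ⬝ᵥ g = 0 := by simpa [dotProduct] using hg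
  rw [hp g g, hp g (M *ᵥ g), Finset.mul_sum]
  apply Finset.sum_le_sum
  intro i _
  have e1 : v i ⬝ᵥ (M *ᵥ g) = e i * (v i ⬝ᵥ g) := by
    rw [aux_symm hM.isHermitian, hv]; simp
  rw [e1, dotProduct_comm g (v i)]
  rcases le_or_gt (lamSecond hM.isHermitian) (e i) with h | h
  · nlinarith [mul_self_nonneg (v i ⬝ᵥ g)]
  · have hz : ∀ j, j ≠ i → (fun _ => (1:ℝ)) ⬝ᵥ v j = 0 := by
      intro j hj
      have h3 := aux_le hM.isHermitian i j hj.symm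
      rw [← he] at h3
      have : 0 < e j := by
        rcases le_max_iff.mp h3 with h4 | h4
        · linarith
        · linarith [he0 i]
      exact (mul_eq_zero.mp (hone j)).resolve_left this.ne'
    have h5 := hp (fun _ => 1) g
    have h6 := hp (fun _ => 1) (fun _ => 1)
    rw [Finset.sum_eq_single i (by intro j _ hj; rw [hz j hj, zero_mul]) (by simp)] at h5 h6
    rw [hg1] at h5
    have h7 : v i ⬝ᵥ g = 0 := by
      rcases mul_eq_zero.mp h5.symm with h8 | h8
      · exfalso
        rw [h8, zero_mul] at h6
        have : (0:ℝ) < Fintype.card V := by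
          exact_mod_cast Fintype.card_pos_iff.mpr ⟨i⟩
        simp [dotProduct] at h6
        simp [h6] at this
      · exact h8
    rw [h7]; simp

open Matrix in
lemma aux_exists {V : Type*} [Fintype V] [DecidableEq V] [Nontrivial V] {M : Matrix V V ℝ}
    (hM : M.PosSemidef) (h1 : M *ᵥ (fun _ => 1) = 0) :
    ∃ f : V → ℝ, f ≠ 0 ∧ ∑ x, f x = 0 ∧ M *ᵥ f = lamSecond hM.isHermitian • f := by
  obtain ⟨v, hv, ho, hp⟩ := aux_basis hM.isHermitian
  obtain ⟨i, j, hij, hl⟩ := aux_mem hM.isHermitian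
  have he0 : ∀ i, 0 ≤ hM.isHermitian.eigenvalues i := hM.eigenvalues_nonneg
  set e := hM.isHermitian.eigenvalues with he
  wlog hle : e i ≤ e j generalizing i j
  · exact this j i hij.symm (by rw [hl, max_comm]) (le_of_not_ge hle)
  rw [max_eq_right hle] at hl
  rw [hl]
  have hone : ∀ i, e i * ((fun _ => 1) ⬝ᵥ v i) = 0 := by
    intro i
    have := aux_symm hM.isHermitian (fun _ => 1) (v i)
    rw [h1, hv] at this
    simpa using this
  have hs : ∀ f : V → ℝ, ∑ x, f x = (fun _ => (1:ℝ)) ⬝ᵥ f := by intro f; simp [dotProduct]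
  have hn : ∀ i, v i ≠ 0 := by
    intro i h
    have := ho i i
    simp [h] at this
  by_cases hb : (fun _ => (1:ℝ)) ⬝ᵥ v j = 0
  · exact ⟨v j, hn j, by rw [hs, hb], hv j⟩
  · have hj0 : e j = 0 := (mul_eq_zero.mp (hone j)).resolve_right hb
    have hi0 : e i = 0 := le_antisymm (hj0 ▸ hle) (he0 i)
    refine ⟨((fun _ => (1:ℝ)) ⬝ᵥ v j) • v i - ((fun _ => (1:ℝ)) ⬝ᵥ v i) • v j, ?_, ?_, ?_⟩
    · intro h
      have h2 : v i ⬝ᵥ (((fun _ => (1:ℝ)) ⬝ᵥ v j) • v i - ((fun _ => (1:ℝ)) ⬝ᵥ v i) • v j) = 0 := by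
        rw [h]; simp
      rw [dotProduct_sub, dotProduct_smul, dotProduct_smul, ho, ho] at h2
      simp [hij] at h2
      apply hb
      simpa [dotProduct] using h2
    · rw [hs, dotProduct_sub, dotProduct_smul, dotProduct_smul]
      simp only [smul_eq_mul]; ring
    · rw [mulVec_sub, mulVec_smul, mulVec_smul, hv, hv, hj0, hi0]
      simp

section tok
variable {V : Type*} [Fintype V] [DecidableEq V]

/-- image of a set under a transposition -/
def sw (a b : V) (A : Finset V) : Finset V := A.map (Equiv.swap a b).toEmbedding

lemma mem_sw (a b x : V) (A : Finset V) : x ∈ sw a b A ↔ Equiv.swap a b x ∈ A := by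
  simp [sw, Finset.mem_map_equiv]

lemma card_sw (a b : V) (A : Finset V) : (sw a b A).card = A.card := by simp [sw]

lemma sw_sw (a b : V) (A : Finset V) : sw a b (sw a b A) = A := by
  ext x; simp [mem_sw]

lemma sw_comm (a b : V) (A : Finset V) : sw a b A = sw b a A := by
  ext x; simp [mem_sw, Equiv.swap_comm a b]

lemma sw_insert (a b x : V) (A : Finset V) :
    sw a b (insert x A) = insert (Equiv.swap a b x) (sw a b A) := by
  simp [sw, Finset.map_insert]

lemma sw_in (a b : V) (A : Finset V) (ha : a ∈ A) (hb : b ∈ A) : sw a b A = A := by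
  ext x
  rw [mem_sw]
  by_cases h1 : x = a
  · subst h1; simp [ha, hb]
  by_cases h2 : x = b
  · subst h2; simp [ha, hb]
  rw [Equiv.swap_apply_of_ne_of_ne h1 h2]

lemma sw_out (a b : V) (A : Finset V) (ha : a ∉ A) (hb : b ∉ A) : sw a b A = A := by
  ext x
  rw [mem_sw]
  by_cases h1 : x = a
  · subst h1; simp [ha, hb]
  by_cases h2 : x = b
  · subst h2; simp [ha, hb]
  rw [Equiv.swap_apply_of_ne_of_ne h1 h2]

/-- token Laplacian acting on functions of finite sets -/
noncomputable def tl (G : SimpleGraph V) [DecidableRel G.Adj] (F : Finset V → ℝ)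
    (A : Finset V) : ℝ :=
  (∑ a, ∑ b, if G.Adj a b then F A - F (sw a b A) else 0) / 2

/-- down operator -/
noncomputable def dn (F : Finset V → ℝ) (S : Finset V) : ℝ := ∑ x ∈ Sᶜ, F (insert x S)

lemma dn_sw (F : Finset V → ℝ) (a b : V) (S : Finset V) :
    dn F (sw a b S) = ∑ x ∈ Sᶜ, F (sw a b (insert x S)) := by
  unfold dn
  symm
  apply Finset.sum_nbij' (Equiv.swap a b) (Equiv.swap a b)
  · intro x hx; simp [mem_sw] at *; exact hx
  · intro x hx; simp [mem_sw] at *; exact hx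
  · intro x _; simp
  · intro x _; simp
  · intro x _; rw [sw_insert]

lemma tl_dn (G : SimpleGraph V) [DecidableRel G.Adj] (F : Finset V → ℝ) (S : Finset V) :
    tl G (dn F) S = dn (tl G F) S := by
  unfold tl
  conv_rhs => unfold dn
  rw [← Finset.sum_div]
  congr 1
  rw [Finset.sum_comm (s := Sᶜ)]
  apply Finset.sum_congr rfl
  intro a _
  rw [Finset.sum_comm (s := Sᶜ)]
  apply Finset.sum_congr rfl
  intro b _
  split_ifs
  · rw [dn_sw, dn, Finset.sum_sub_distrib]
  · simp

lemma sum_ins (k : ℕ) (a : V) (h : Finset V → ℝ) :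
    (∑ S ∈ Finset.powersetCard k Finset.univ, if a ∈ S then 0 else h (insert a S)) =
    ∑ A ∈ Finset.powersetCard (k+1) Finset.univ, if a ∈ A then h A else 0 := by
  rw [← Finset.sum_filter]
  have : ∀ S : Finset V, (if a ∈ S then 0 else h (insert a S)) =
      if a ∉ S then h (insert a S) else 0 := by intro S; split_ifs <;> simp_all
  simp only [this]
  rw [← Finset.sum_filter]
  apply Finset.sum_nbij' (fun S => insert a S) (fun A => A.erase a)
  · intro S hS; simp at *; rw [Finset.card_insert_of_notMem hS.2, hS.1]
  · intro S hS; simp at *; rw [Finset.card_erase_of_mem hS.2, hS.1]; simp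
  · intro S hS; simp at *; exact hS.2
  · intro S hS; simp at *; exact Finset.insert_erase hS.2
  · intro S _; rfl

lemma sum_ins2 (k : ℕ) (h : Finset V → ℝ) :
    (∑ S ∈ Finset.powersetCard k Finset.univ, ∑ a, if a ∈ S then 0 else h (insert a S)) =
    (k+1) * ∑ A ∈ Finset.powersetCard (k+1) Finset.univ, h A := by
  rw [Finset.sum_comm]
  simp only [sum_ins]
  rw [Finset.sum_comm, Finset.mul_sum]
  apply Finset.sum_congr rfl
  intro A hA
  rw [Finset.mem_powersetCard] at hA
  simp [hA.2]

lemma dn_eq (F : Finset V → ℝ) (S : Finset V) :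
    dn F S = ∑ a, if a ∈ S then 0 else F (insert a S) := by
  unfold dn
  have : ∀ a : V, (if a ∈ S then 0 else F (insert a S)) =
      if a ∈ Sᶜ then F (insert a S) else 0 := by intro a; simp only [Finset.mem_compl]; split_ifs <;> simp_all
  simp only [this]
  rw [Finset.sum_ite_mem, Finset.univ_inter]

lemma sum_sw (k : ℕ) (a b : V) (h : Finset V → ℝ) :
    ∑ A ∈ Finset.powersetCard k Finset.univ, h (sw a b A) =
    ∑ A ∈ Finset.powersetCard k Finset.univ, h A := by
  apply Finset.sum_nbij' (sw a b) (sw a b)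
  · intro S hS; simp [card_sw] at *; exact hS
  · intro S hS; simp [card_sw] at *; exact hS
  · intro S _; exact sw_sw a b S
  · intro S _; exact sw_sw a b S
  · intro S _; rfl

lemma tl_energy (G : SimpleGraph V) [DecidableRel G.Adj] (F : Finset V → ℝ) (k : ℕ) :
    ∑ A ∈ Finset.powersetCard k Finset.univ, F A * tl G F A =
    (∑ a, ∑ b, if G.Adj a b then
      ∑ A ∈ Finset.powersetCard k Finset.univ, (F A - F (sw a b A))^2 else 0) / 4 := by
  unfold tl
  simp only [mul_div_assoc', Finset.mul_sum]
  rw [← Finset.sum_div, Finset.sum_comm]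
  rw [show ∀ x y : ℝ, (x / 2 = y / 4 ↔ x = y / 2) by intro x y; constructor <;> intro h <;> linarith]
  rw [Finset.sum_div]
  apply Finset.sum_congr rfl
  intro a _
  rw [Finset.sum_comm, Finset.sum_div]
  apply Finset.sum_congr rfl
  intro b _
  split_ifs
  · have h := sum_sw k a b (fun A => F A ^ 2)
    have : ∀ A, (F A - F (sw a b A))^2 = 2 * (F A * (F A - F (sw a b A))) + (F (sw a b A) ^ 2 - F A ^2) := by
      intro A; ring
    simp only [this]
    rw [Finset.sum_add_distrib, Finset.sum_sub_distrib, h, ← Finset.mul_sum]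
    ring
  · simp

/-- restriction -/
noncomputable def gs (F : Finset V → ℝ) (S : Finset V) (a : V) : ℝ :=
  if a ∈ S then 0 else F (insert a S)

lemma sw_ins (a b : V) (S : Finset V) (ha : a ∉ S) (hb : b ∉ S) :
    sw a b (insert a S) = insert b S := by
  rw [sw_insert, sw_out a b S ha hb]; simp

lemma pair_sum (F : Finset V → ℝ) (k : ℕ) (a b : V) (hab : a ≠ b) :
    ∑ S ∈ Finset.powersetCard k Finset.univ, (gs F S a - gs F S b)^2 =
    (∑ A ∈ Finset.powersetCard (k+1) Finset.univ, (F A - F (sw a b A))^2) / 2 +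
    2 * ∑ A ∈ Finset.powersetCard (k+1) Finset.univ, if a ∈ A ∧ b ∈ A then F A ^ 2 else 0 := by
  have h1 := sum_ins k a (fun A => (if b ∈ A then F A ^ 2 else (F A - F (sw a b A))^2 / 2))
  have h2 := sum_ins k b (fun A => (if a ∈ A then F A ^ 2 else (F A - F (sw a b A))^2 / 2))
  rw [Finset.sum_div, Finset.mul_sum, ← Finset.sum_add_distrib]
  trans (∑ A ∈ Finset.powersetCard (k+1) Finset.univ, ((if a ∈ A then (if b ∈ A then F A ^ 2 else (F A - F (sw a b A))^2 / 2) else 0) + (if b ∈ A then (if a ∈ A then F A ^ 2 else (F A - F (sw a b A))^2 / 2) else 0)))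
  · rw [Finset.sum_add_distrib, ← h1, ← h2, ← Finset.sum_add_distrib]
    apply Finset.sum_congr rfl
    intro S _
    unfold gs
    by_cases ha : a ∈ S <;> by_cases hb : b ∈ S
    · simp [ha, hb]
    · simp [ha, hb]
    · simp [ha, hb]
    · have e2 : sw a b (insert b S) = insert a S := by
        rw [sw_comm]; exact sw_ins b a S hb ha
      simp only [ha, hb, if_false, Finset.mem_insert, hab, hab.symm, or_self, sw_ins a b S ha hb, e2]
      ring
  · apply Finset.sum_congr rfl
    intro A _
    by_cases ha : a ∈ A <;> by_cases hb : b ∈ A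
    · simp [ha, hb, sw_in]; ring
    · simp [ha, hb]
    · simp [ha, hb]
    · simp [ha, hb, sw_out]

lemma edge_count (G : SimpleGraph V) [DecidableRel G.Adj] (A : Finset V) (c : ℝ) (hc : 0 ≤ c) :
    (∑ a, ∑ b, if G.Adj a b then (if a ∈ A ∧ b ∈ A then c else 0) else 0)
      ≤ A.card * (A.card - 1) * c := by
  calc _ ≤ ∑ a, ∑ b, ((if a ∈ A then (if b ∈ A then c else 0) else 0) -
            if a = b then (if a ∈ A then c else 0) else 0) := by
        apply Finset.sum_le_sum; intro a _
        apply Finset.sum_le_sum; intro b _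
        by_cases hab : a = b
        · subst hab; simp; split_ifs <;> simp
        · split_ifs <;> simp_all
    _ = A.card * (A.card - 1) * c := by
        simp [Finset.sum_sub_distrib]; ring

lemma low_bound (G : SimpleGraph V) [DecidableRel G.Adj] (l : ℝ)
    (hr : ∀ g : V → ℝ, ∑ x, g x = 0 → l * ∑ x, g x ^ 2 ≤
      (∑ a, ∑ b, if G.Adj a b then (g a - g b)^2 else 0) / 2)
    (k : ℕ) (F : Finset V → ℝ) (hF : ∀ S : Finset V, S.card = k → dn F S = 0) :
    (k + 1) * (l - k) * ∑ A ∈ Finset.powersetCard (k+1) Finset.univ, F A ^ 2 ≤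
     ∑ A ∈ Finset.powersetCard (k+1) Finset.univ, F A * tl G F A := by
  have h1 : ∑ S ∈ Finset.powersetCard k Finset.univ, l * ∑ x, gs F S x ^ 2 ≤
     ∑ S ∈ Finset.powersetCard k Finset.univ, 
      (∑ a, ∑ b, if G.Adj a b then (gs F S a - gs F S b)^2 else 0) / 2 := by
    apply Finset.sum_le_sum
    intro S hS
    rw [Finset.mem_powersetCard] at hS
    apply hr
    rw [← hF S hS.2, dn_eq]; rfl
  have h2 : ∑ S ∈ Finset.powersetCard k Finset.univ, l * ∑ x, gs F S x ^ 2 =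
      l * ((k+1) * ∑ A ∈ Finset.powersetCard (k+1) Finset.univ, F A ^ 2) := by
    rw [← Finset.mul_sum, ← sum_ins2]
    congr 1
    apply Finset.sum_congr rfl; intro S _
    apply Finset.sum_congr rfl; intro x _
    unfold gs; split_ifs <;> simp
  have h3 : ∑ S ∈ Finset.powersetCard k Finset.univ, 
      (∑ a, ∑ b, if G.Adj a b then (gs F S a - gs F S b)^2 else 0) / 2 =
      (∑ A ∈ Finset.powersetCard (k+1) Finset.univ, F A * tl G F A) +
      ∑ A ∈ Finset.powersetCard (k+1) Finset.univ, 
        ∑ a, ∑ b, if G.Adj a b then (if a ∈ A ∧ b ∈ A then F A ^ 2 else 0) else 0 := by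
    rw [tl_energy, ← Finset.sum_div, Finset.sum_comm, Finset.sum_comm (s := Finset.powersetCard (k+1) Finset.univ)]
    rw [Finset.sum_div, Finset.sum_div, ← Finset.sum_add_distrib]
    apply Finset.sum_congr rfl; intro a _
    rw [Finset.sum_comm, Finset.sum_comm (s := Finset.powersetCard (k+1) Finset.univ)]
    rw [Finset.sum_div, Finset.sum_div, ← Finset.sum_add_distrib]
    apply Finset.sum_congr rfl; intro b _
    by_cases hab : G.Adj a b
    · simp only [hab, if_true]
      rw [pair_sum F k a b hab.ne]; ring
    · simp [hab]
  have h4 : ∑ A ∈ Finset.powersetCard (k+1) Finset.univ, 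
        (∑ a, ∑ b, if G.Adj a b then (if a ∈ A ∧ b ∈ A then F A ^ 2 else 0) else 0) ≤
        ∑ A ∈ Finset.powersetCard (k+1) Finset.univ, (k+1) * k * F A ^ 2 := by
    apply Finset.sum_le_sum
    intro A hA
    rw [Finset.mem_powersetCard] at hA
    have := edge_count G A (F A ^ 2) (sq_nonneg _)
    rw [hA.2] at this
    push_cast at this
    simpa using this
  rw [← Finset.mul_sum] at h4
  rw [h2, h3] at h1
  linarith

lemma main_low (G : SimpleGraph V) [DecidableRel G.Adj] (l m : ℝ)
    (hr : ∀ g : V → ℝ, ∑ x, g x = 0 → l * ∑ x, g x ^ 2 ≤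
      (∑ a, ∑ b, if G.Adj a b then (g a - g b)^2 else 0) / 2)
    (k : ℕ) : ∀ (_ : (k:ℝ) ≤ l) (F : Finset V → ℝ)
    (_ : ∀ A : Finset V, A.card = k → tl G F A = m * F A)
    (_ : ∑ A ∈ Finset.powersetCard k Finset.univ, F A = 0)
    (_ : ∃ A : Finset V, A.card = k ∧ F A ≠ 0), l ≤ m := by
  induction k with
  | zero =>
    rintro _ F _ hs ⟨A, hA, hF⟩
    rw [Finset.card_eq_zero] at hA
    subst hA
    simp at hs
    exact absurd hs hF
  | succ k ih =>
    rintro hl F he hs ⟨A, hA, hF⟩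
    push_cast at hl
    by_cases hd : ∀ S : Finset V, S.card = k → dn F S = 0
    · have h := low_bound G l hr k F hd
      have h2 : ∑ A ∈ Finset.powersetCard (k+1) Finset.univ, F A * tl G F A =
          m * ∑ A ∈ Finset.powersetCard (k+1) Finset.univ, F A ^ 2 := by
        rw [Finset.mul_sum]
        apply Finset.sum_congr rfl
        intro B hB
        rw [Finset.mem_powersetCard] at hB
        rw [he B hB.2]; ring
      rw [h2] at h
      have h3 : 0 < ∑ A ∈ Finset.powersetCard (k+1) Finset.univ, F A ^ 2 := by
        apply Finset.sum_pos'
        · intro _ _; positivity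
        · exact ⟨A, by simp [Finset.mem_powersetCard, hA], by positivity⟩
      have h4 := le_of_mul_le_mul_right h h3
      have : (0:ℝ) ≤ k := Nat.cast_nonneg k
      nlinarith [mul_nonneg this (sub_nonneg.mpr hl)]
    · push Not at hd
      refine ih (by linarith) (dn F) ?_ ?_ hd
      · intro S hS
        rw [tl_dn, dn, dn, Finset.mul_sum]
        apply Finset.sum_congr rfl
        intro x hx
        apply he
        rw [Finset.card_insert_of_notMem (by simpa using hx), hS]
      · simp only [dn_eq]
        rw [sum_ins2, hs, mul_zero]

lemma tl_lift (G : SimpleGraph V) [DecidableRel G.Adj] (g : V → ℝ) (A : Finset V) :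
    tl G (fun A => ∑ a ∈ A, g a) A =
      ∑ v ∈ A, (∑ b, if G.Adj v b then g v - g b else 0) := by
  unfold tl
  have h1 : ∀ a b, ∑ x ∈ sw a b A, g x = ∑ x ∈ A, g (Equiv.swap a b x) := by
    intro a b; simp [sw]
  simp only [h1]
  have h2 : ∀ a b, G.Adj a b → (∑ x ∈ A, g x - ∑ x ∈ A, g (Equiv.swap a b x)) =
      (if a ∈ A then g a - g b else 0) + (if b ∈ A then g b - g a else 0) := by
    intro a b hab
    have hab := hab.ne
    rw [← Finset.sum_sub_distrib]
    rw [← Finset.sum_ite_eq' A a (fun _ => g a - g b), ← Finset.sum_ite_eq' A b (fun _ => g b - g a),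
      ← Finset.sum_add_distrib]
    apply Finset.sum_congr rfl
    intro x _
    by_cases h1 : x = a
    · subst h1; simp [hab]
    by_cases h2 : x = b
    · subst h2; simp [h1]
    rw [Equiv.swap_apply_of_ne_of_ne h1 h2]
    simp [h1, h2]
  have h3 : ∀ a b, (if G.Adj a b then (∑ x ∈ A, g x - ∑ x ∈ A, g (Equiv.swap a b x)) else 0) =
     (if G.Adj a b then (if a ∈ A then g a - g b else 0) else 0) +
     (if G.Adj b a then (if b ∈ A then g b - g a else 0) else 0) := by
    intro a b
    by_cases hab : G.Adj a b
    · simp only [hab, hab.symm, if_true]; exact h2 a b hab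
    · have : ¬ G.Adj b a := fun h => hab h.symm
      simp [hab, this]
  simp only [h3, Finset.sum_add_distrib]
  rw [Finset.sum_comm (f := fun a b => (if G.Adj b a then (if b ∈ A then g b - g a else 0) else 0))]
  rw [add_self_div_two, ← Finset.sum_filter_add_sum_filter_not Finset.univ (fun a => a ∈ A)]
  rw [Finset.sum_eq_zero (s := Finset.filter (fun a => a ∉ A) Finset.univ), add_zero]
  · rw [Finset.filter_mem_eq_inter, Finset.univ_inter]
    apply Finset.sum_congr rfl; intro v hv
    simp [hv]
  · intro a ha
    simp at ha
    simp [ha]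

end tok

lemma tok_adj (n k : ℕ) (G : SimpleGraph (Fin n)) (hk : 1 ≤ k)
    (A B : {s : Finset (Fin n) // s.card = k}) :
    (tokenGraph n k G).Adj A B ↔ ∃ a b, a ∈ A.1 ∧ b ∉ A.1 ∧ G.Adj a b ∧ B.1 = sw a b A.1 := by
  obtain ⟨A, hA⟩ := A
  obtain ⟨B, hB⟩ := B
  have key : (A ∩ B).card = k - 1 ∧ (∃ u v, G.Adj u v ∧ symmDiff A B = {u, v}) ↔
      ∃ a b, a ∈ A ∧ b ∉ A ∧ G.Adj a b ∧ B = sw a b A := by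
    constructor
    · rintro ⟨hc, u, v, huv, hs⟩
      have hd1 : (A \ B).card = 1 := by
        have := Finset.card_sdiff_add_card_inter A B; omega
      have hd2 : (B \ A).card = 1 := by
        have := Finset.card_sdiff_add_card_inter B A
        rw [Finset.inter_comm] at this; omega
      obtain ⟨a, ha⟩ := Finset.card_eq_one.mp hd1
      obtain ⟨b, hb⟩ := Finset.card_eq_one.mp hd2
      have ha' : ∀ x, (x ∈ A ∧ x ∉ B) ↔ x = a := by
        intro x; rw [← Finset.mem_sdiff, ha, Finset.mem_singleton]
      have hb' : ∀ x, (x ∈ B ∧ x ∉ A) ↔ x = b := by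
        intro x; rw [← Finset.mem_sdiff, hb, Finset.mem_singleton]
      have hs' : ∀ x, (x = a ∨ x = b) ↔ (x = u ∨ x = v) := by
        intro x
        have : x ∈ symmDiff A B ↔ x ∈ ({u, v} : Finset (Fin n)) := by rw [hs]
        rw [Finset.mem_symmDiff, ha', hb'] at this
        simpa using this
      have haA := (ha' a).mpr rfl
      have hbB := (hb' b).mpr rfl
      have hab : a ≠ b := by rintro rfl; exact hbB.2 haA.1
      refine ⟨a, b, haA.1, hbB.2, ?_, ?_⟩
      · have h1 := (hs' a).mp (Or.inl rfl)
        have h2 := (hs' b).mp (Or.inr rfl)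
        rcases h1 with rfl | rfl <;> rcases h2 with rfl | rfl
        · exact absurd rfl hab
        · exact huv
        · exact huv.symm
        · exact absurd rfl hab
      · ext x
        rw [mem_sw]
        by_cases h1 : x = a
        · subst h1; simp [haA, hbB]
        by_cases h2 : x = b
        · subst h2; simp [haA, hbB]
        rw [Equiv.swap_apply_of_ne_of_ne h1 h2]
        have := ha' x
        have := hb' x
        tauto
    · rintro ⟨a, b, ha, hb, hab, rfl⟩
      have hi : A ∩ sw a b A = A.erase a := by
        ext x
        rw [Finset.mem_inter, mem_sw, Finset.mem_erase]
        by_cases h1 : x = a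
        · subst h1; simp [hb]
        by_cases h2 : x = b
        · subst h2; simp [hb]
        rw [Equiv.swap_apply_of_ne_of_ne h1 h2]; simp [h1]
      refine ⟨?_, a, b, hab, ?_⟩
      · rw [hi, Finset.card_erase_of_mem ha, hA]
      · ext x
        rw [Finset.mem_symmDiff, mem_sw, Finset.mem_insert, Finset.mem_singleton]
        by_cases h1 : x = a
        · subst h1; simp [ha, hb]
        by_cases h2 : x = b
        · subst h2; simp [ha, hb]
        rw [Equiv.swap_apply_of_ne_of_ne h1 h2]; simp [h1, h2]
  rw [← key, tokenGraph, SimpleGraph.fromRel_adj]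
  constructor
  · rintro ⟨_, h | ⟨h1, h2⟩⟩
    · exact h
    · exact ⟨by rw [Finset.inter_comm]; exact h1, by rw [symmDiff_comm]; exact h2⟩
  · intro h
    refine ⟨?_, Or.inl h⟩
    intro he
    have he : A = B := congrArg Subtype.val he
    subst he
    have := h.1
    rw [Finset.inter_self, hA] at this
    omega

lemma tl_eq {V : Type*} [Fintype V] [DecidableEq V] (G : SimpleGraph V) [DecidableRel G.Adj]
    (F : Finset V → ℝ) (A : Finset V) :
    tl G F A = ∑ p : V × V with (p.1 ∈ A ∧ p.2 ∉ A ∧ G.Adj p.1 p.2), (F A - F (sw p.1 p.2 A)) := by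
  rw [Finset.sum_filter, Fintype.sum_prod_type]
  unfold tl
  have h3 : ∀ a b, (if G.Adj a b then F A - F (sw a b A) else 0) =
     (if a ∈ A ∧ b ∉ A ∧ G.Adj a b then F A - F (sw a b A) else 0) +
     (if b ∈ A ∧ a ∉ A ∧ G.Adj b a then F A - F (sw b a A) else 0) := by
    intro a b
    rw [sw_comm b a]
    simp only [G.adj_comm b a]
    by_cases ha : a ∈ A <;> by_cases hb : b ∈ A
    · simp [ha, hb, sw_in]
    · simp [ha, hb]
    · simp [ha, hb]
    · simp [ha, hb, sw_out]
  simp only [h3, Finset.sum_add_distrib]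
  rw [Finset.sum_comm (f := fun a b => (if b ∈ A ∧ a ∉ A ∧ G.Adj b a then F A - F (sw b a A) else 0))]
  rw [add_self_div_two]

lemma lap_apply {V : Type*} [Fintype V] [DecidableEq V] (G : SimpleGraph V) [DecidableRel G.Adj]
    (f : V → ℝ) (v : V) :
    Matrix.mulVec (G.lapMatrix ℝ) f v = ∑ b, if G.Adj v b then f v - f b else 0 := by
  rw [SimpleGraph.lapMatrix_mulVec_apply, ← Finset.sum_filter, ← SimpleGraph.neighborFinset_eq_filter,
    Finset.sum_sub_distrib]
  simp

lemma bridge (n k : ℕ) (G : SimpleGraph (Fin n)) [DecidableRel G.Adj] (hk : 1 ≤ k)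
    (f : {s : Finset (Fin n) // s.card = k} → ℝ) (F : Finset (Fin n) → ℝ)
    (hF : ∀ A : {s : Finset (Fin n) // s.card = k}, F A.1 = f A)
    (A : {s : Finset (Fin n) // s.card = k}) :
    Matrix.mulVec ((tokenGraph n k G).lapMatrix ℝ) f A = tl G F A.1 := by
  rw [lap_apply, tl_eq, ← Finset.sum_filter]
  symm
  apply Finset.sum_bij (fun p _ => (⟨sw p.1 p.2 A.1, by rw [card_sw]; exact A.2⟩ :
    {s : Finset (Fin n) // s.card = k}))
  · rintro ⟨a, b⟩ h
    simp only [Finset.mem_filter, Finset.mem_univ, true_and] at h ⊢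
    rw [tok_adj n k G hk]
    exact ⟨a, b, h.1, h.2.1, h.2.2, rfl⟩
  · rintro ⟨a, b⟩ h ⟨c, d⟩ h' he
    simp only [Finset.mem_filter, Finset.mem_univ, true_and] at h h'
    have he : sw a b A.1 = sw c d A.1 := congrArg Subtype.val he
    have hm : ∀ x, Equiv.swap a b x ∈ A.1 ↔ Equiv.swap c d x ∈ A.1 := by
      intro x; rw [← mem_sw, ← mem_sw, he]
    have hac : a = c := by
      by_contra hne
      have had : a ≠ d := by rintro rfl; exact h'.2.1 h.1
      have := hm a
      rw [Equiv.swap_apply_left, Equiv.swap_apply_of_ne_of_ne hne had] at this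
      exact h.2.1 (this.mpr h.1)
    have hbd : b = d := by
      by_contra hne
      have hbc : b ≠ c := by rintro rfl; exact h.2.1 h'.1
      have := hm b
      rw [Equiv.swap_apply_right, Equiv.swap_apply_of_ne_of_ne hbc hne] at this
      exact h.2.1 (this.mp h.1)
    rw [hac, hbd]
  · intro B hB
    simp only [Finset.mem_filter, Finset.mem_univ, true_and] at hB
    rw [tok_adj n k G hk] at hB
    obtain ⟨a, b, h1, h2, h3, h4⟩ := hB
    exact ⟨(a, b), by simp [h1, h2, h3], Subtype.ext h4.symm⟩
  · rintro ⟨a, b⟩ _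
    rw [← hF, ← hF]

lemma lap_one {V : Type*} [Fintype V] [DecidableEq V] (G : SimpleGraph V) [DecidableRel G.Adj] :
    Matrix.mulVec (G.lapMatrix ℝ) (fun _ => 1) = 0 := by
  ext v; rw [lap_apply]; simp

/-- If `λ₂(L(G)) ≥ k` for some `1 ≤ k ≤ ⌊n/2⌋`, then the algebraic connectivity of the
`k`-th token graph equals that of `G`: `λ₂(L_k(G)) = λ₂(L(G))`. -/
theorem token_algebraic_connectivity (n k : ℕ) (G : SimpleGraph (Fin n))
    [DecidableRel G.Adj] (hk : 1 ≤ k) (hkn : k ≤ n / 2)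
    (h2 : lamSecond (SimpleGraph.posSemidef_lapMatrix ℝ G).isHermitian ≥ (k : ℝ)) :
    lamSecond (SimpleGraph.posSemidef_lapMatrix ℝ (tokenGraph n k G)).isHermitian =
      lamSecond (SimpleGraph.posSemidef_lapMatrix ℝ G).isHermitian := by

  set LG := lamSecond (SimpleGraph.posSemidef_lapMatrix ℝ G).isHermitian with hLG
  have hk1 : (1:ℝ) ≤ k := by exact_mod_cast hk
  haveI : Nontrivial (Fin n) := Fin.nontrivial_iff_two_le.mpr (by omega)
  obtain ⟨g, hg0, hgs, hge⟩ := aux_exists (SimpleGraph.posSemidef_lapMatrix ℝ G) (lap_one G)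
  rw [← hLG] at hge
  -- two points where g differs
  have hdiff : ∃ a b, g a ≠ g b := by
    by_contra hcon
    push Not at hcon
    apply hg0
    ext a
    have : ∑ x, g x = n * g a := by
      rw [Finset.sum_congr rfl (fun x _ => hcon x a)]; simp
    rw [hgs] at this
    have hn : (n:ℝ) ≠ 0 := by
      have : n ≠ 0 := by omega
      exact_mod_cast this
    simpa [hn] using this.symm
  obtain ⟨a, b, hab⟩ := hdiff
  have hab' : a ≠ b := fun h => hab (by rw [h])
  obtain ⟨A, hA1, hA2, hAc⟩ : ∃ A : Finset (Fin n), a ∈ A ∧ b ∉ A ∧ A.card = k := by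
    obtain ⟨T, hT1, hT2, hT3⟩ := Finset.exists_subsuperset_card_eq (s := {a}) (t := Finset.univ.erase b)
      (n := k) (by simp [hab']) (by simpa using hk)
      (by rw [Finset.card_erase_of_mem (Finset.mem_univ _)]; simp; omega)
    exact ⟨T, by simpa using hT1, fun h => by simpa using hT2 h, hT3⟩
  let A₁ : {s : Finset (Fin n) // s.card = k} := ⟨A, hAc⟩
  let A₂ : {s : Finset (Fin n) // s.card = k} := ⟨sw a b A, by rw [card_sw, hAc]⟩
  have hA12 : A₁ ≠ A₂ := by
    intro h
    have h : A = sw a b A := congrArg Subtype.val h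
    have h3 : b ∈ sw a b A := by rw [mem_sw]; simpa using hA1
    rw [← h] at h3
    exact hA2 h3
  haveI : Nontrivial {s : Finset (Fin n) // s.card = k} := ⟨A₁, A₂, hA12⟩
  apply le_antisymm
  · -- upper bound
    let F : Finset (Fin n) → ℝ := fun A => ∑ x ∈ A, g x
    let f : {s : Finset (Fin n) // s.card = k} → ℝ := fun A => F A.1
    have hfe : Matrix.mulVec ((tokenGraph n k G).lapMatrix ℝ) f = LG • f := by
      ext B
      rw [bridge n k G hk f F (fun _ => rfl), tl_lift]
      simp only [← lap_apply, hge]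
      simp [f, F, Finset.mul_sum]
    have hfs : ∑ B, f B = 0 := by
      have h := aux_symm (SimpleGraph.posSemidef_lapMatrix ℝ (tokenGraph n k G)).isHermitian
        (fun _ => 1) f
      rw [lap_one, hfe] at h
      simp [dotProduct, ← Finset.mul_sum] at h
      rcases h with h | h
      · linarith
      · exact h
    have hf0 : 0 < dotProduct f f := by
      have hne : f ≠ 0 := by
        intro h
        have e1 : ∑ x ∈ A, g x = 0 := congrFun h A₁
        have e2 : ∑ x ∈ sw a b A, g x = 0 := congrFun h A₂
        have e3 : A = insert a (A.erase a) := (Finset.insert_erase hA1).symm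
        have e4 : sw a b A = insert b (A.erase a) := by
          conv_lhs => rw [e3]
          exact sw_ins a b _ (by simp) (by simp [hA2])
        rw [e3, Finset.sum_insert (by simp)] at e1
        rw [e4, Finset.sum_insert (by simp [hA2])] at e2
        exact hab (by linarith)
      exact lt_of_le_of_ne (Finset.sum_nonneg fun i _ => mul_self_nonneg _)
        (fun h => hne (dotProduct_self_eq_zero.mp h.symm))
    have h := aux_ray (SimpleGraph.posSemidef_lapMatrix ℝ (tokenGraph n k G)) (lap_one _) f hfs
    rw [hfe, dotProduct_smul, smul_eq_mul] at h
    exact le_of_mul_le_mul_right h hf0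
  · -- lower bound
    obtain ⟨f, hf0, hfs, hfe⟩ := aux_exists
      (SimpleGraph.posSemidef_lapMatrix ℝ (tokenGraph n k G)) (lap_one _)
    set m := lamSecond (SimpleGraph.posSemidef_lapMatrix ℝ (tokenGraph n k G)).isHermitian
    let F : Finset (Fin n) → ℝ := fun A => if h : A.card = k then f ⟨A, h⟩ else 0
    have hF : ∀ B : {s : Finset (Fin n) // s.card = k}, F B.1 = f B := by
      intro B; simp [F, B.2]
    refine main_low G LG m ?_ k h2 F ?_ ?_ ?_
    · intro g hg
      have h := aux_ray (SimpleGraph.posSemidef_lapMatrix ℝ G) (lap_one G) g hg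
      have h' := SimpleGraph.lapMatrix_toLinearMap₂' ℝ G g
      rw [Matrix.toLinearMap₂'_apply'] at h'
      rw [h'] at h
      simpa [dotProduct, sq] using h
    · intro B hB
      have := bridge n k G hk f F hF ⟨B, hB⟩
      rw [hfe] at this
      rw [← this, hF ⟨B, hB⟩]; rfl
    · rw [← hfs, ← Finset.sum_congr rfl (fun B _ => hF B)]
      rw [Finset.sum_subtype (p := fun s : Finset (Fin n) => s.card = k)]
      intro x; simp [Finset.mem_powersetCard]
    · obtain ⟨B, hB⟩ := Function.ne_iff.mp hf0
      exact ⟨B.1, B.2, by rw [hF]; exact hB⟩
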